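/- arXiv:2003.13445 — 2 statements merged into one kernel-verified Lean document; each statement's English description precedes it below -/
import Mathlib

section
/- (Generalized Grobman–Hartman theorem, nonautonomous version.) Let (A_n)_{n∈ℤ} be invertible bounded operators on a Banach space X admitting a generalized exponential dichotomy, and let f_n : X → X be c-Lipschitz maps with sup_n ‖f_n‖_∞ < ∞ such that each A_n + f_n is a homeomorphism. If c is sufficiently small, there exists a unique sequence (H_n)_{n∈ℤ} of homeomorphisms of X with H_{n+1} ∘ A_n = (A_n + f_n) ∘ H_n for all n, sup_n ‖H_n − Id‖_∞ < ∞, and H_n(x) − x ∈ S(n) + A_n^{-1}U(n+1) for every n and x. -/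
/-- Dichotomy data bundled. -/
structure GDich {X : Type*} [NormedAddCommGroup X] [NormedSpace ℝ X]
    (A : ℤ → X ≃L[ℝ] X) (𝒜 : ℤ → ℤ → X →L[ℝ] X) (S U : ℤ → Submodule ℝ X)
    (D q : ℝ) (P : ℤ → X →L[ℝ] X) : Prop where
  hid : ∀ n, 𝒜 n n = ContinuousLinearMap.id ℝ X
  hco : ∀ m n, 𝒜 (m + 1) n = (A m : X →L[ℝ] X).comp (𝒜 m n)
  hScl : ∀ n, IsClosed (S n : Set X)
  hUcl : ∀ n, IsClosed (U n : Set X)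
  hSinv : ∀ n, ∀ x ∈ S n, A n x ∈ S (n + 1)
  hUinv : ∀ n, ∀ x ∈ U (n + 1), (A n).symm x ∈ U n
  hD : 0 < D
  hq0 : 0 < q
  hq1 : q < 1
  hPran : ∀ n x, P n x ∈ S n
  hQran : ∀ n x, x - P n x ∈ U n
  hPS : ∀ n, ∀ x ∈ S n, P n x = x
  hPU : ∀ n, ∀ x ∈ U n, P n x = 0
  hb1 : ∀ (n : ℤ) (k : ℕ) x, ‖𝒜 n (n - k) (P (n - k) x)‖ ≤ D * q ^ k * ‖x‖
  hb2 : ∀ (n : ℤ) (k : ℕ) x, ‖𝒜 n (n + k) (x - P (n + k) x)‖ ≤ D * q ^ k * ‖x‖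

namespace GDich
open Filter Topology

variable {X : Type*} [NormedAddCommGroup X] [NormedSpace ℝ X]
  {A : ℤ → X ≃L[ℝ] X} {𝒜 : ℤ → ℤ → X →L[ℝ] X} {S U : ℤ → Submodule ℝ X}
  {D q : ℝ} {P : ℤ → X →L[ℝ] X}

lemma co_apply (h : GDich A 𝒜 S U D q P) (m n : ℤ) (x : X) :
    𝒜 (m + 1) n x = A m (𝒜 m n x) := by
  rw [h.hco]; rfl

lemma orbit (h : GDich A 𝒜 S U D q P) (x : ℤ → X) (hx : ∀ n, x (n + 1) = A n (x n))
    (m n : ℤ) : 𝒜 m n (x n) = x m := by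
  induction m using Int.inductionOn' (b := n) with
  | zero => simp [h.hid]
  | succ k _ ih => rw [h.co_apply, ih, hx]
  | pred k _ ih =>
    have h1 := h.co_apply (k - 1) n (x n)
    have h2 := hx (k - 1)
    rw [sub_add_cancel] at h1 h2
    apply (A (k - 1)).injective
    rw [← h1, ih, h2]

lemma S_mem (h : GDich A 𝒜 S U D q P) (n : ℤ) (k : ℕ) (x : X) (hx : x ∈ S n) :
    𝒜 (n + k) n x ∈ S (n + k) := by
  induction k with
  | zero => simpa [h.hid] using hx
  | succ k ih =>
    have := h.hSinv _ _ ih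
    rw [← h.co_apply] at this
    push_cast
    rwa [← add_assoc]

lemma U_mem (h : GDich A 𝒜 S U D q P) (n : ℤ) (k : ℕ) (x : X) (hx : x ∈ U n) :
    𝒜 (n - k) n x ∈ U (n - k) := by
  induction k with
  | zero => simpa [h.hid] using hx
  | succ k ih =>
    have e : n - (k : ℤ) = n - ((k + 1 : ℕ) : ℤ) + 1 := by push_cast; ring
    rw [e] at ih
    have := h.hUinv _ _ ih
    rwa [h.co_apply, ContinuousLinearEquiv.symm_apply_apply] at this

lemma zero_of_bound {D q B : ℝ} (hq0 : 0 < q) (hq1 : q < 1) (v : X)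
    (hv : ∀ k : ℕ, ‖v‖ ≤ D * q ^ k * B) : v = 0 := by
  have h1 : Tendsto (fun k : ℕ => D * q ^ k * B) atTop (𝓝 (D * 0 * B)) :=
    ((tendsto_pow_atTop_nhds_zero_of_lt_one hq0.le hq1).const_mul D).mul_const B
  have := ge_of_tendsto' h1 hv
  simpa using this

lemma homog (h : GDich A 𝒜 S U D q P) (x : ℤ → X) (hx : ∀ n, x (n + 1) = A n (x n))
    (hE : ∀ n, A n (x n - P n (x n)) ∈ U (n + 1)) (B : ℝ) (hB : ∀ n, ‖x n‖ ≤ B) (n : ℤ) :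
    x n = 0 := by
  have hDq : ∀ k : ℕ, 0 ≤ D * q ^ k := fun k => by
    have := h.hD; have := h.hq0; positivity
  have hs : ∀ n, P (n + 1) (x (n + 1)) = A n (P n (x n)) := by
    intro n
    have h1 := h.hPU _ _ (hE n)
    rw [map_sub, map_sub, ← hx, h.hPS _ _ (h.hSinv _ _ (h.hPran n (x n)))] at h1
    exact sub_eq_zero.1 h1
  have hs0 : ∀ n, P n (x n) = 0 := by
    intro n
    apply zero_of_bound (D := D) (B := B) h.hq0 h.hq1
    intro k
    rw [← h.orbit (fun n => P n (x n)) hs n (n - k)]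
    exact (h.hb1 n k _).trans (mul_le_mul_of_nonneg_left (hB _) (hDq k))
  apply zero_of_bound (D := D) (B := B) h.hq0 h.hq1
  intro k
  have := h.hb2 n k (x (n + k))
  rw [hs0, sub_zero, h.orbit x hx] at this
  exact this.trans (mul_le_mul_of_nonneg_left (hB _) (hDq k))

/-- Green operator, stable part. -/
noncomputable def G1 (𝒜 : ℤ → ℤ → X →L[ℝ] X) (P : ℤ → X →L[ℝ] X) (y : ℤ → X) (n : ℤ) : X :=
  ∑' k : ℕ, 𝒜 n (n - k) (P (n - k) (y (n - k)))

/-- Green operator, unstable part. -/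
noncomputable def G2 (𝒜 : ℤ → ℤ → X →L[ℝ] X) (P : ℤ → X →L[ℝ] X) (y : ℤ → X) (n : ℤ) : X :=
  ∑' k : ℕ, 𝒜 n (n + (k + 1 : ℕ)) (y (n + (k + 1 : ℕ)) - P (n + (k + 1 : ℕ)) (y (n + (k + 1 : ℕ))))

/-- Green operator. -/
noncomputable def Gr (𝒜 : ℤ → ℤ → X →L[ℝ] X) (P : ℤ → X →L[ℝ] X) (y : ℤ → X) (n : ℤ) : X :=
  G1 𝒜 P y n - G2 𝒜 P y n

lemma b1 (h : GDich A 𝒜 S U D q P) {y : ℤ → X} {M : ℝ} (hy : ∀ n, ‖y n‖ ≤ M) (n : ℤ) (k : ℕ) :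
    ‖𝒜 n (n - k) (P (n - k) (y (n - k)))‖ ≤ D * M * q ^ k := by
  have := h.hD; have := h.hq0
  calc _ ≤ D * q ^ k * ‖y (n - k)‖ := h.hb1 n k _
    _ ≤ D * q ^ k * M := by gcongr; exact hy _
    _ = _ := by ring

lemma b2 (h : GDich A 𝒜 S U D q P) {y : ℤ → X} {M : ℝ} (hy : ∀ n, ‖y n‖ ≤ M) (n : ℤ) (k : ℕ) :
    ‖𝒜 n (n + k) (y (n + k) - P (n + k) (y (n + k)))‖ ≤ D * M * q ^ k := by
  have := h.hD; have := h.hq0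
  calc _ ≤ D * q ^ k * ‖y (n + k)‖ := h.hb2 n k _
    _ ≤ D * q ^ k * M := by gcongr; exact hy _
    _ = _ := by ring

lemma hsg (h : GDich A 𝒜 S U D q P) (M : ℝ) :
    HasSum (fun k : ℕ => D * M * q ^ k) (D * M * (1 - q)⁻¹) :=
  (hasSum_geometric_of_lt_one h.hq0.le h.hq1).mul_left _

lemma hsg' (h : GDich A 𝒜 S U D q P) (M : ℝ) :
    HasSum (fun k : ℕ => D * M * q ^ (k + 1)) (D * M * q * (1 - q)⁻¹) := by
  have := (hasSum_geometric_of_lt_one h.hq0.le h.hq1).mul_left (D * M * q)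
  refine Eq.mp (congrArg (HasSum · _) (funext fun k => ?_)) this
  ring

lemma b2' (h : GDich A 𝒜 S U D q P) {y : ℤ → X} {M : ℝ} (hy : ∀ n, ‖y n‖ ≤ M) (n : ℤ) (k : ℕ) :
    ‖𝒜 n (n + (k + 1 : ℕ)) (y (n + (k + 1 : ℕ)) - P (n + (k + 1 : ℕ)) (y (n + (k + 1 : ℕ))))‖
      ≤ D * M * q ^ (k + 1) := h.b2 hy n (k + 1)

variable [CompleteSpace X]

lemma s1 (h : GDich A 𝒜 S U D q P) {y : ℤ → X} {M : ℝ} (hy : ∀ n, ‖y n‖ ≤ M) (n : ℤ) :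
    Summable (fun k : ℕ => 𝒜 n (n - k) (P (n - k) (y (n - k)))) :=
  Summable.of_norm_bounded (h.hsg M).summable (h.b1 hy n)

lemma s2 (h : GDich A 𝒜 S U D q P) {y : ℤ → X} {M : ℝ} (hy : ∀ n, ‖y n‖ ≤ M) (n : ℤ) :
    Summable (fun k : ℕ => 𝒜 n (n + k) (y (n + k) - P (n + k) (y (n + k)))) :=
  Summable.of_norm_bounded (h.hsg M).summable (h.b2 hy n)

lemma s2' (h : GDich A 𝒜 S U D q P) {y : ℤ → X} {M : ℝ} (hy : ∀ n, ‖y n‖ ≤ M) (n : ℤ) :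
    Summable (fun k : ℕ => 𝒜 n (n + (k + 1 : ℕ))
      (y (n + (k + 1 : ℕ)) - P (n + (k + 1 : ℕ)) (y (n + (k + 1 : ℕ))))) :=
  Summable.of_norm_bounded (h.hsg' M).summable (h.b2' hy n)

lemma Gr_norm (h : GDich A 𝒜 S U D q P) {y : ℤ → X} {M : ℝ} (hy : ∀ n, ‖y n‖ ≤ M) (n : ℤ) :
    ‖Gr 𝒜 P y n‖ ≤ D * (1 + q) / (1 - q) * M := by
  have h1 : ‖G1 𝒜 P y n‖ ≤ _ := tsum_of_norm_bounded (h.hsg M) (h.b1 hy n)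
  have h2 : ‖G2 𝒜 P y n‖ ≤ _ := tsum_of_norm_bounded (h.hsg' M) (h.b2' hy n)
  calc _ ≤ _ := norm_sub_le _ _
    _ ≤ _ := add_le_add h1 h2
    _ = _ := by rw [div_eq_mul_inv]; ring

lemma Gr_sub (h : GDich A 𝒜 S U D q P) {y z : ℤ → X} {M N : ℝ} (hy : ∀ n, ‖y n‖ ≤ M)
    (hz : ∀ n, ‖z n‖ ≤ N) (n : ℤ) :
    Gr 𝒜 P (fun k => y k - z k) n = Gr 𝒜 P y n - Gr 𝒜 P z n := by
  have h1 := (h.s1 hy n).tsum_sub (h.s1 hz n)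
  have h2 := (h.s2' hy n).tsum_sub (h.s2' hz n)
  unfold Gr
  have e1 : G1 𝒜 P (fun k => y k - z k) n = G1 𝒜 P y n - G1 𝒜 P z n := by
    unfold G1; rw [← h1]; congr 1; ext k; simp only [map_sub]
  have e2 : G2 𝒜 P (fun k => y k - z k) n = G2 𝒜 P y n - G2 𝒜 P z n := by
    unfold G2; rw [← h2]; congr 1; ext k; simp only [map_sub]; abel
  rw [e1, e2]; abel

lemma G1_mem (h : GDich A 𝒜 S U D q P) {y : ℤ → X} {M : ℝ} (hy : ∀ n, ‖y n‖ ≤ M) (n : ℤ) :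
    G1 𝒜 P y n ∈ S n := by
  have := (h.s1 hy n).hasSum
  refine (h.hScl n).mem_of_tendsto this (Eventually.of_forall fun s => ?_)
  refine Submodule.sum_mem _ fun k _ => ?_
  have := h.S_mem (n - k) k _ (h.hPran (n - k) (y (n - k)))
  rwa [sub_add_cancel] at this

lemma A_G2 (h : GDich A 𝒜 S U D q P) {y : ℤ → X} {M : ℝ} (hy : ∀ n, ‖y n‖ ≤ M) (n : ℤ) :
    HasSum (fun k : ℕ => 𝒜 (n + 1) (n + 1 + k) (y (n + 1 + k) - P (n + 1 + k) (y (n + 1 + k))))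
      (A n (G2 𝒜 P y n)) := by
  have := (A n).toContinuousLinearMap.hasSum (h.s2' hy n).hasSum
  refine Eq.mp (congrArg (HasSum · _) (funext fun k => ?_)) this
  have e : n + ((k + 1 : ℕ) : ℤ) = n + 1 + k := by push_cast; ring
  simp only [e, h.co_apply]
  rfl

lemma A_G2_mem (h : GDich A 𝒜 S U D q P) {y : ℤ → X} {M : ℝ} (hy : ∀ n, ‖y n‖ ≤ M) (n : ℤ) :
    A n (G2 𝒜 P y n) ∈ U (n + 1) := by
  refine (h.hUcl (n + 1)).mem_of_tendsto (h.A_G2 hy n) (Eventually.of_forall fun s => ?_)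
  refine Submodule.sum_mem _ fun k _ => ?_
  have := h.U_mem (n + 1 + k) k _ (h.hQran (n + 1 + k) (y (n + 1 + k)))
  rwa [add_sub_cancel_right] at this

lemma E_iff (h : GDich A 𝒜 S U D q P) (n : ℤ) (x : X) :
    A n (x - P n x) ∈ U (n + 1) ↔
      x ∈ S n ⊔ (U (n + 1)).map ((A n).symm.toLinearEquiv.toLinearMap) := by
  rw [Submodule.mem_sup]
  constructor
  · intro hx
    refine ⟨P n x, h.hPran n x, x - P n x, ⟨_, hx, ?_⟩, by abel⟩
    exact (A n).symm_apply_apply _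
  · rintro ⟨s, hs, _, ⟨u, hu, rfl⟩, rfl⟩
    have hu' : (A n).symm u ∈ U n := h.hUinv n u hu
    change A n (s + (A n).symm u - P n (s + (A n).symm u)) ∈ _
    rw [map_add (P n), h.hPS n s hs, h.hPU n _ hu']
    simpa using hu

lemma Gr_mem (h : GDich A 𝒜 S U D q P) {y : ℤ → X} {M : ℝ} (hy : ∀ n, ‖y n‖ ≤ M) (n : ℤ) :
    Gr 𝒜 P y n ∈ S n ⊔ (U (n + 1)).map ((A n).symm.toLinearEquiv.toLinearMap) := by
  refine Submodule.sub_mem _ (Submodule.mem_sup_left (h.G1_mem hy n))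
    (Submodule.mem_sup_right ⟨_, h.A_G2_mem hy n, ?_⟩)
  exact (A n).symm_apply_apply _

lemma Gr_succ (h : GDich A 𝒜 S U D q P) {y : ℤ → X} {M : ℝ} (hy : ∀ n, ‖y n‖ ≤ M) (n : ℤ) :
    Gr 𝒜 P y (n + 1) = A n (Gr 𝒜 P y n) + y (n + 1) := by
  have h2 : A n (G2 𝒜 P y n) = y (n + 1) - P (n + 1) (y (n + 1)) + G2 𝒜 P y (n + 1) := by
    rw [← (h.A_G2 hy n).tsum_eq, (h.s2 hy (n + 1)).tsum_eq_zero_add]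
    simp [h.hid, G2]
  have h1 : G1 𝒜 P y (n + 1) = P (n + 1) (y (n + 1)) + A n (G1 𝒜 P y n) := by
    have := (A n).toContinuousLinearMap.map_tsum (h.s1 hy n)
    unfold G1
    rw [(h.s1 hy (n + 1)).tsum_eq_zero_add]
    congr 1
    · simp [h.hid]
    · refine Eq.trans ?_ this.symm
      congr 1
      ext k
      have e : n + 1 - ((k + 1 : ℕ) : ℤ) = n - k := by push_cast; ring
      rw [e, h.co_apply]
      rfl
  unfold Gr
  rw [map_sub, h1, h2]
  abel

lemma bound (h : GDich A 𝒜 S U D q P) (x y : ℤ → X) {M B : ℝ} (hy : ∀ n, ‖y n‖ ≤ M)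
    (hB : ∀ n, ‖x n‖ ≤ B)
    (hE : ∀ n, x n ∈ S n ⊔ (U (n + 1)).map ((A n).symm.toLinearEquiv.toLinearMap))
    (hx : ∀ n, x (n + 1) = A n (x n) + y n) (n : ℤ) :
    ‖x n‖ ≤ D * (1 + q) / (1 - q) * M := by
  have hy' : ∀ n, ‖(fun k => y (k - 1)) n‖ ≤ M := fun n => hy _
  have := h.homog (fun n => x n - Gr 𝒜 P (fun k => y (k - 1)) n) ?_ ?_
    (B + D * (1 + q) / (1 - q) * M) ?_ n
  · rw [sub_eq_zero.1 this]; exact h.Gr_norm hy' n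
  · intro n
    rw [hx, h.Gr_succ hy', map_sub, add_sub_cancel_right]; abel
  · intro n
    rw [h.E_iff]
    exact Submodule.sub_mem _ (hE n) (h.Gr_mem hy' n)
  · intro n
    exact (norm_sub_le _ _).trans (add_le_add (hB n) (h.Gr_norm hy' n))

lemma K_nonneg (h : GDich A 𝒜 S U D q P) : 0 ≤ D * (1 + q) / (1 - q) := by
  have := h.hD; have := h.hq0; have := sub_pos.2 h.hq1
  positivity

lemma solve (h : GDich A 𝒜 S U D q P) (p : ℤ → X → X → X) {M c : ℝ} (hc : 0 ≤ c)
    (hK : c * (D * (1 + q) / (1 - q)) < 1)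
    (hpc : ∀ n, Continuous fun z : X × X => p n z.1 z.2)
    (hpb : ∀ n x v, ‖p n x v‖ ≤ M)
    (hpl : ∀ n x v w, ‖p n x v - p n x w‖ ≤ c * ‖v - w‖) :
    ∃ w : ℤ → X → X, (∀ n, Continuous (w n)) ∧
      (∃ C, ∀ n x, ‖w n x‖ ≤ C) ∧
      (∀ n x, w n x ∈ S n ⊔ (U (n + 1)).map ((A n).symm.toLinearEquiv.toLinearMap)) ∧
      ∀ n x, w (n + 1) x = A n (w n x) + p n x (w n x) := by
  set K := D * (1 + q) / (1 - q) with hKdef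
  have hK0 : 0 ≤ K := h.K_nonneg
  let Y : (ℤ → X → X) → X → ℤ → X := fun w x k => p (k - 1) x (w (k - 1) x)
  have hYb : ∀ w x k, ‖Y w x k‖ ≤ M := fun w x k => hpb _ _ _
  have hYc : ∀ (w : BoundedContinuousFunction (ℤ × X) X) (k : ℤ),
      Continuous fun x => Y (fun n x => w (n, x)) x k := fun w k => by
    have : Continuous fun x : X => (x, w (k - 1, x)) := by fun_prop
    exact (hpc (k - 1)).comp this
  let T : BoundedContinuousFunction (ℤ × X) X → BoundedContinuousFunction (ℤ × X) X := fun w =>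
    BoundedContinuousFunction.ofNormedAddCommGroup
      (fun z => Gr 𝒜 P (Y (fun n x => w (n, x)) z.2) z.1)
      (by
        rw [continuous_prod_of_discrete_left]
        intro n
        have hY := hYc w
        refine Continuous.sub ?_ ?_
        · refine continuous_tsum (fun k => ?_) (h.hsg M).summable
            (fun k x => h.b1 (hYb (fun n x => w (n, x)) x) n k)
          exact (𝒜 n (n - k)).continuous.comp ((P (n - k)).continuous.comp (hY (n - k)))
        · refine continuous_tsum (fun k => ?_) (h.hsg' M).summable
            (fun k x => h.b2' (hYb (fun n x => w (n, x)) x) n k)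
          exact (𝒜 n (n + (k + 1 : ℕ))).continuous.comp ((hY (n + (k + 1 : ℕ))).sub
            ((P (n + (k + 1 : ℕ))).continuous.comp (hY (n + (k + 1 : ℕ))))))
      (K * M) (fun z => h.Gr_norm (hYb (fun n x => w (n, x)) z.2) z.1)
  have hT : ContractingWith ⟨c * K, mul_nonneg hc hK0⟩ T := by
    refine ⟨by exact_mod_cast hK, LipschitzWith.of_dist_le_mul fun v w => ?_⟩
    change dist (T v) (T w) ≤ c * K * dist v w
    rw [BoundedContinuousFunction.dist_le (mul_nonneg (mul_nonneg hc hK0) dist_nonneg)]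
    rintro ⟨n, x⟩
    rw [dist_eq_norm]
    change ‖Gr 𝒜 P (Y (fun n x => v (n, x)) x) n - Gr 𝒜 P (Y (fun n x => w (n, x)) x) n‖
      ≤ c * K * dist v w
    rw [← h.Gr_sub (hYb (fun n x => v (n, x)) x) (hYb (fun n x => w (n, x)) x)]
    have := h.Gr_norm (y := fun k => Y (fun n x => v (n, x)) x k - Y (fun n x => w (n, x)) x k)
      (M := c * dist v w) (fun k => (hpl _ _ _ _).trans ?_) n
    · exact this.trans_eq (by ring)
    · rw [← dist_eq_norm]
      exact mul_le_mul_of_nonneg_left (BoundedContinuousFunction.dist_coe_le_dist _) hc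
  let w := ContractingWith.fixedPoint T hT
  have hw : T w = w := hT.fixedPoint_isFixedPt
  have hw' : ∀ n x, w (n, x) = Gr 𝒜 P (Y (fun n x => w (n, x)) x) n := fun n x => by
    conv_lhs => rw [← hw]
    rfl
  refine ⟨fun n x => w (n, x), fun n => by fun_prop, ⟨K * M, fun n x => ?_⟩, fun n x => ?_,
    fun n x => ?_⟩
  · dsimp only; rw [hw']; exact h.Gr_norm (hYb (fun n x => w (n, x)) x) n
  · dsimp only; rw [hw']; exact h.Gr_mem (hYb (fun n x => w (n, x)) x) n
  · dsimp only
    rw [hw', h.Gr_succ (hYb (fun n x => w (n, x)) x), ← hw']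
    simp only [Y, add_sub_cancel_right]

lemma orb_exists (Φ : ℤ → X ≃ₜ X) :
    ∃ o : ℤ → X ≃ₜ X, ∀ n x, o (n + 1) x = Φ n (o n x) := by
  let pos : ℕ → X ≃ₜ X := fun k => Nat.rec (Homeomorph.refl X) (fun j g => g.trans (Φ j)) k
  let neg : ℕ → X ≃ₜ X := fun k =>
    Nat.rec (Homeomorph.refl X) (fun j g => g.trans (Φ (-(j + 1 : ℤ))).symm) k
  refine ⟨fun n => match n with
    | Int.ofNat k => pos k
    | Int.negSucc k => neg (k + 1), ?_⟩
  intro n x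
  rcases n with k | k
  · rfl
  · have e : Int.negSucc k = -(k + 1 : ℤ) := by omega
    have key : neg k x = Φ (Int.negSucc k) (neg (k + 1) x) := by
      rw [e]
      exact ((Φ (-(k + 1 : ℤ))).apply_symm_apply _).symm
    rcases k with _ | j
    · exact key
    · exact key

lemma conj (h : GDich A 𝒜 S U D q P) (Φ : ℤ → X ≃ₜ X) (p : ℤ → X → X → X) {M c : ℝ}
    (hc : 0 ≤ c) (hK : c * (D * (1 + q) / (1 - q)) < 1)
    (hpc : ∀ n, Continuous fun z : X × X => p n z.1 z.2)
    (hpb : ∀ n x v, ‖p n x v‖ ≤ M)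
    (hpl : ∀ n x v w, ‖p n x v - p n x w‖ ≤ c * ‖v - w‖) :
    ∃ w : ℤ → X → X, (∀ n, Continuous (w n)) ∧
      (∃ C, ∀ n x, ‖w n x‖ ≤ C) ∧
      (∀ n x, w n x ∈ S n ⊔ (U (n + 1)).map ((A n).symm.toLinearEquiv.toLinearMap)) ∧
      ∀ n x, w (n + 1) (Φ n x) = A n (w n x) + p n x (w n x) := by
  obtain ⟨o, ho⟩ := orb_exists Φ
  obtain ⟨w, hwc, ⟨C, hC⟩, hE, hw⟩ := h.solve (fun n x v => p n (o n x) v) hc hK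
    (fun n => by
      have : Continuous fun z : X × X => (o n z.1, z.2) := by fun_prop
      exact (hpc n).comp this)
    (fun n x v => hpb _ _ _) (fun n x v w => hpl _ _ _ _)
  refine ⟨fun n x => w n ((o n).symm x), fun n => (hwc n).comp (o n).symm.continuous,
    ⟨C, fun n x => hC _ _⟩, fun n x => hE _ _, fun n x => ?_⟩
  have h1 : (o (n + 1)).symm (Φ n x) = (o n).symm x := by
    rw [Homeomorph.symm_apply_eq, ho, Homeomorph.apply_symm_apply]
  dsimp only
  rw [h1, hw, Homeomorph.apply_symm_apply]

lemma uniq (h : GDich A 𝒜 S U D q P) (Φ : ℤ → X ≃ₜ X) (w r : ℤ → X → X) {C c : ℝ}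
    (hc : 0 ≤ c) (hK : c * (D * (1 + q) / (1 - q)) < 1)
    (hC : ∀ n x, ‖w n x‖ ≤ C)
    (hE : ∀ n x, w n x ∈ S n ⊔ (U (n + 1)).map ((A n).symm.toLinearEquiv.toLinearMap))
    (hr : ∀ n x, ‖r n x‖ ≤ c * ‖w n x‖)
    (hw : ∀ n x, w (n + 1) (Φ n x) = A n (w n x) + r n x) (n : ℤ) (x : X) : w n x = 0 := by
  obtain ⟨o, ho⟩ := orb_exists Φ
  set K := D * (1 + q) / (1 - q) with hKdef
  have hK0 : 0 ≤ K := h.K_nonneg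
  let v : ℤ → X := fun m => w m (o m ((o n).symm x))
  have step : ∀ k : ℕ, ∀ m, ‖v m‖ ≤ 1 * (c * K) ^ k * C := by
    intro k
    induction k with
    | zero => intro m; simpa using hC _ _
    | succ k ih =>
      intro m
      have := h.bound v (fun m => r m (o m ((o n).symm x))) (M := c * (1 * (c * K) ^ k * C)) (B := C)
        (fun m => (hr _ _).trans (mul_le_mul_of_nonneg_left (ih m) hc))
        (fun m => hC _ _) (fun m => hE _ _) (fun m => by
          change w (m + 1) (o (m + 1) _) = _
          rw [ho, hw]) m
      refine this.trans_eq ?_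
      rw [← hKdef]; ring
  have h1 : Tendsto (fun k : ℕ => 1 * (c * K) ^ k * C) atTop (𝓝 (1 * 0 * C)) :=
    ((tendsto_pow_atTop_nhds_zero_of_lt_one (by positivity) hK).const_mul 1).mul_const C
  have h2 := ge_of_tendsto' h1 (fun k => step k n)
  have h3 : v n = 0 := by simpa using h2
  simpa [v] using h3

end GDich

theorem stmt_6
    {X : Type*} [NormedAddCommGroup X] [NormedSpace ℝ X] [CompleteSpace X]
    (A : ℤ → X ≃L[ℝ] X) (𝒜 : ℤ → ℤ → X →L[ℝ] X)
    (hid : ∀ n, 𝒜 n n = ContinuousLinearMap.id ℝ X)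
    (hco : ∀ m n, 𝒜 (m + 1) n = (A m : X →L[ℝ] X).comp (𝒜 m n))
    (S U : ℤ → Submodule ℝ X)
    (hScl : ∀ n, IsClosed (S n : Set X)) (hUcl : ∀ n, IsClosed (U n : Set X))
    (hcompl : ∀ n, IsCompl (S n) (U n))
    (hSinv : ∀ n, ∀ x ∈ S n, A n x ∈ S (n + 1))
    (hUinv : ∀ n, ∀ x ∈ U (n + 1), (A n).symm x ∈ U n)
    (D lam : ℝ) (hD : 0 < D) (hlam : 0 < lam)
    (hstab : ∀ m n, n ≤ m → ∀ x ∈ S n,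
      ‖𝒜 m n x‖ ≤ D * Real.exp (-lam * ((m : ℝ) - (n : ℝ))) * ‖x‖)
    (hunst : ∀ m n, m ≤ n → ∀ x ∈ U n,
      ‖𝒜 m n x‖ ≤ D * Real.exp (-lam * ((n : ℝ) - (m : ℝ))) * ‖x‖)
    (P : ℤ → X →L[ℝ] X)
    (hPran : ∀ n x, P n x ∈ S n)
    (hPS : ∀ n, ∀ x ∈ S n, P n x = x)
    (hPU : ∀ n, ∀ x ∈ U n, P n x = 0)
    (hPbdd : ∃ C, ∀ n, ‖P n‖ ≤ C)
    (hb1 : ∀ m n, n ≤ m →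
      ‖(𝒜 m n).comp (P n)‖ ≤ D * Real.exp (-lam * ((m : ℝ) - (n : ℝ))))
    (hb2 : ∀ m n, m ≤ n →
      ‖(𝒜 m n).comp (ContinuousLinearMap.id ℝ X - P n)‖ ≤
        D * Real.exp (-lam * ((n : ℝ) - (m : ℝ))))
    (f : ℤ → X → X) (c : ℝ) (hc : 0 ≤ c)
    (hflip : ∀ n x y, ‖f n x - f n y‖ ≤ c * ‖x - y‖)
    (hfbdd : ∃ M, ∀ n x, ‖f n x‖ ≤ M)
    (hFhomeo : ∀ n : ℤ, ∃ G : X ≃ₜ X, ∀ x, G x = A n x + f n x)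
    -- `c` sufficiently small:
    (hsmall : c * D * (1 + Real.exp (-lam)) / (1 - Real.exp (-lam)) < 1) :
    ∃ H : ℤ → X ≃ₜ X,
      ((∀ (n : ℤ) (x : X), H (n + 1) (A n x) = A n (H n x) + f n (H n x)) ∧
       (∃ C, ∀ (n : ℤ) (x : X), ‖H n x - x‖ ≤ C) ∧
       (∀ (n : ℤ) (x : X),
         H n x - x ∈ S n ⊔ (U (n + 1)).map ((A n).symm.toLinearEquiv.toLinearMap))) ∧
      ∀ H' : ℤ → X ≃ₜ X,
        ((∀ (n : ℤ) (x : X), H' (n + 1) (A n x) = A n (H' n x) + f n (H' n x)) ∧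
         (∃ C, ∀ (n : ℤ) (x : X), ‖H' n x - x‖ ≤ C) ∧
         (∀ (n : ℤ) (x : X),
           H' n x - x ∈ S n ⊔ (U (n + 1)).map ((A n).symm.toLinearEquiv.toLinearMap))) →
        ∀ (n : ℤ) (x : X), H' n x = H n x := by
  have hQ : ∀ n x, x - P n x ∈ U n := by
    intro n x
    have hx : x ∈ S n ⊔ U n := by rw [(hcompl n).sup_eq_top]; trivial
    obtain ⟨s, hs, u, hu, rfl⟩ := Submodule.mem_sup.1 hx
    rw [map_add, hPS n s hs, hPU n u hu]
    simpa using hu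
  have hexp : ∀ k : ℕ, Real.exp (-lam * (k : ℝ)) = Real.exp (-lam) ^ k := by
    intro k; rw [← Real.exp_nat_mul]; ring_nf
  have h : GDich A 𝒜 S U D (Real.exp (-lam)) P :=
    { hid := hid, hco := hco, hScl := hScl, hUcl := hUcl, hSinv := hSinv, hUinv := hUinv
      hD := hD, hq0 := Real.exp_pos _, hq1 := (by simpa using hlam)
      hPran := hPran, hQran := hQ, hPS := hPS, hPU := hPU
      hb1 := by
        intro n k x
        have h1 := hb1 n (n - k) (by omega)
        have h2 := ((𝒜 n (n - k)).comp (P (n - k))).le_of_opNorm_le h1 x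
        rw [← hexp]
        refine h2.trans_eq ?_
        push_cast; ring_nf
      hb2 := by
        intro n k x
        have h1 := hb2 n (n + k) (by omega)
        have h2 := ((𝒜 n (n + k)).comp
          (ContinuousLinearMap.id ℝ X - P (n + k))).le_of_opNorm_le h1 x
        rw [← hexp]
        refine h2.trans_eq ?_
        push_cast; ring_nf }
  obtain ⟨M, hM⟩ := hfbdd
  choose F hF using hFhomeo
  have hK : c * (D * (1 + Real.exp (-lam)) / (1 - Real.exp (-lam))) < 1 := by
    refine lt_of_eq_of_lt ?_ hsmall; ring
  have hfc : ∀ n, Continuous (f n) := by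
    intro n
    have : LipschitzWith ⟨c, hc⟩ (f n) := LipschitzWith.of_dist_le_mul fun x y => by
      rw [dist_eq_norm, dist_eq_norm]; exact hflip n x y
    exact this.continuous
  obtain ⟨u, huc, ⟨Cu, hCu⟩, huE, hu⟩ := h.conj (fun n => (A n).toHomeomorph)
    (fun n x v => f n (x + v)) (M := M) hc hK
    (fun n => (hfc n).comp (continuous_fst.add continuous_snd))
    (fun n x v => hM _ _) (fun n x v w => by simpa using hflip n (x + v) (x + w))
  obtain ⟨g, hgc, ⟨Cg, hCg⟩, hgE, hg⟩ := h.conj F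
    (fun n x v => - f n x) (M := M) hc hK
    (fun n => ((hfc n).comp continuous_fst).neg)
    (fun n x v => by simpa using hM n x) (fun n x v w => by simpa using by positivity)
  have hu' : ∀ n x, u (n + 1) (A n x) = A n (u n x) + f n (x + u n x) := hu
  -- left inverse
  have hl : ∀ n x, u n x + g n (x + u n x) = 0 := by
    refine h.uniq (fun n => (A n).toHomeomorph) (fun n x => u n x + g n (x + u n x))
      (fun _ _ => 0) (C := Cu + Cg) hc hK
      (fun n x => (norm_add_le _ _).trans (add_le_add (hCu _ _) (hCg _ _)))
      (fun n x => Submodule.add_mem _ (huE _ _) (hgE _ _))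
      (fun n x => by simpa using by positivity) (fun n x => ?_)
    change u (n + 1) (A n x) + g (n + 1) (A n x + u (n + 1) (A n x)) = _
    have e : A n x + u (n + 1) (A n x) = F n (x + u n x) := by
      rw [hF, hu', map_add]; abel
    rw [e, hg, hu', map_add]; abel
  have hr : ∀ n x, g n x + u n (x + g n x) = 0 := by
    refine h.uniq F (fun n x => g n x + u n (x + g n x))
      (fun n x => f n (x + (g n x + u n (x + g n x))) - f n x) (C := Cg + Cu) hc hK
      (fun n x => (norm_add_le _ _).trans (add_le_add (hCg _ _) (hCu _ _)))
      (fun n x => Submodule.add_mem _ (hgE _ _) (huE _ _))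
      (fun n x => by simpa using hflip n (x + (g n x + u n (x + g n x))) x) (fun n x => ?_)
    have e : F n x + g (n + 1) (F n x) = A n (x + g n x) := by
      rw [hg, hF, map_add]; abel
    rw [e, hg, hu', map_add, ← add_assoc]; abel
  let H : ℤ → X ≃ₜ X := fun n =>
    { toFun := fun x => x + u n x
      invFun := fun x => x + g n x
      left_inv := fun x => by
        dsimp only; rw [add_assoc, hl, add_zero]
      right_inv := fun x => by
        dsimp only; rw [add_assoc, hr, add_zero]
      continuous_toFun := continuous_id.add (huc n)
      continuous_invFun := continuous_id.add (hgc n) }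
  have hH : ∀ n x, H n x = x + u n x := fun n x => rfl
  refine ⟨H, ⟨fun n x => ?_, ⟨Cu, fun n x => ?_⟩, fun n x => ?_⟩, ?_⟩
  · rw [hH, hH, hu', map_add]; abel
  · rw [hH, add_sub_cancel_left]; exact hCu n x
  · rw [hH, add_sub_cancel_left]; exact huE n x
  · rintro H' ⟨h1, ⟨C', h2⟩, h3⟩ n x
    rw [hH]
    have := h.uniq (fun n => (A n).toHomeomorph) (fun n x => (H' n x - x) - u n x)
      (fun n x => f n (H' n x) - f n (x + u n x)) (C := C' + Cu) hc hK
      (fun n x => (norm_sub_le _ _).trans (add_le_add (h2 _ _) (hCu _ _)))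
      (fun n x => Submodule.sub_mem _ (h3 _ _) (huE _ _))
      (fun n x => by rw [sub_sub]; exact hflip n _ _) (fun n x => ?_) n x
    · rw [sub_sub] at this; exact sub_eq_zero.1 this
    · change H' (n + 1) (A n x) - A n x - u (n + 1) (A n x) = _
      rw [h1, hu', map_sub, map_sub]; abel
end

section
/- (Hölder regularity of the conjugacy.) Under the assumptions of the generalized Grobman–Hartman theorem, assume additionally ‖𝒜(m,n)‖ ≤ e^{ρ|m−n|} for all m, n ∈ ℤ, and set α₀ = λ/ρ. Then for every α ∈ (0, α₀), if the Lipschitz constant c of the f_n is sufficiently small, the conjugating homeomorphisms H_n and their inverses H_n^{-1} are α-Hölder continuous on every bounded subset of X, uniformly in n. -/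
open Filter Topology

section Aux

variable {X : Type*} [NormedAddCommGroup X] [NormedSpace ℝ X]

lemma aux_cyc (A : ℤ → X ≃L[ℝ] X) (𝒜 : ℤ → ℤ → X →L[ℝ] X)
    (hid : ∀ n, 𝒜 n n = ContinuousLinearMap.id ℝ X)
    (hco : ∀ m n, 𝒜 (m + 1) n = (A m : X →L[ℝ] X).comp (𝒜 m n)) (k j : ℤ) (x : X) :
    𝒜 k (j + 1) (A j x) = 𝒜 k j x := by
  have hco' : ∀ m n x, 𝒜 (m + 1) n x = A m (𝒜 m n x) := by
    intro m n x; rw [hco]; rfl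
  induction k using Int.inductionOn' (b := j + 1) with
  | zero => rw [hid, hco', hid]; rfl
  | succ k _ ih => rw [hco', hco', ih]
  | pred k _ ih =>
    have h1 := hco' (k - 1) (j + 1) (A j x)
    have h2 := hco' (k - 1) j x
    rw [sub_add_cancel] at h1 h2
    apply (A (k - 1)).injective
    rw [← h1, ← h2, ih]

lemma aux_tend (D lam b : ℝ) (hlam : 0 < lam) :
    Tendsto (fun m : ℕ => D * Real.exp (-lam * (m : ℝ)) * b) atTop (𝓝 0) := by
  have h1 : Tendsto (fun m : ℕ => Real.exp (-lam * (m : ℝ))) atTop (𝓝 0) := by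
    apply Real.tendsto_exp_atBot.comp
    exact tendsto_natCast_atTop_atTop.const_mul_atTop_of_neg (by linarith)
  simpa using (h1.const_mul D).mul_const b

lemma aux_geom (v : ℕ → X) (L β D lam b : ℝ) (hlam : 0 < lam) (hβ : 0 < β)
    (hv : ∀ m : ℕ, ‖v m‖ ≤ D * Real.exp (-lam * (m : ℝ)) * b)
    (hd : ∀ m : ℕ, ‖v m - v (m + 1)‖ ≤ L * Real.exp (-β * (m : ℝ))) :
    ‖v 0‖ ≤ L / (1 - Real.exp (-β)) := by
  have ht : Tendsto v atTop (𝓝 0) := squeeze_zero_norm hv (aux_tend D lam b hlam)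
  have := dist_le_of_le_geometric_of_tendsto₀ (Real.exp (-β)) L
    (by rw [Real.exp_lt_one_iff]; linarith) (f := v) (fun m => by
      rw [dist_eq_norm, ← Real.exp_nat_mul, mul_comm (m : ℝ)]; exact hd m) ht
  simpa using this

lemma aux_w (μ a b : ℝ) (hμ : 0 ≤ μ) (n t : ℝ) (h : |a - b| ≤ t) :
    Real.exp (μ * |a - n|) ≤ Real.exp (μ * t) * Real.exp (μ * |b - n|) := by
  rw [← Real.exp_add, Real.exp_le_exp, ← mul_add]
  apply mul_le_mul_of_nonneg_left _ hμ
  have : |a - n| ≤ |a - b| + |b - n| := abs_sub_le a b n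
  linarith

lemma aux_s (A : ℤ → X ≃L[ℝ] X) (𝒜 : ℤ → ℤ → X →L[ℝ] X)
    (hid : ∀ n, 𝒜 n n = ContinuousLinearMap.id ℝ X)
    (hcyc : ∀ k j x, 𝒜 k (j + 1) (A j x) = 𝒜 k j x)
    (S : ℤ → Submodule ℝ X)
    (D lam μ : ℝ) (hD : 0 < D) (hlam : 0 < lam) (hμ : 0 ≤ μ) (hμl : μ < lam)
    (hstab : ∀ m n, n ≤ m → ∀ x ∈ S n,
      ‖𝒜 m n x‖ ≤ D * Real.exp (-lam * ((m : ℝ) - (n : ℝ))) * ‖x‖)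
    (s r : ℤ → X) (hs : ∀ k, s k ∈ S k) (hr : ∀ k, r k ∈ S (k + 1))
    (hrec : ∀ k, s (k + 1) = A k (s k) + r k) (b E : ℝ) (hb : ∀ k, ‖s k‖ ≤ b) (n : ℤ)
    (hE : ∀ k, ‖r k‖ ≤ E * Real.exp (μ * |(k : ℝ) - n|)) (k : ℤ) :
    ‖s k‖ ≤ D * E * Real.exp μ * Real.exp (μ * |(k : ℝ) - n|) / (1 - Real.exp (-(lam - μ))) := by
  have hE0 : 0 ≤ E := by
    have := (norm_nonneg _).trans (hE n)
    simpa using this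
  have := aux_geom (fun m : ℕ => 𝒜 k (k - m) (s (k - m)))
    (D * E * Real.exp μ * Real.exp (μ * |(k : ℝ) - n|)) (lam - μ) D lam b hlam (by linarith)
    ?_ ?_
  · simpa [hid] using this
  · intro m
    refine (hstab k (k - m) (by omega) _ (hs _)).trans ?_
    push_cast
    rw [sub_sub_cancel]
    exact mul_le_mul_of_nonneg_left (hb _) (by positivity)
  · intro m
    have e : k - ((m + 1 : ℕ) : ℤ) + 1 = k - m := by push_cast; ring
    have h1 := hrec (k - ((m + 1 : ℕ) : ℤ))
    have h2 := hcyc k (k - ((m + 1 : ℕ) : ℤ)) (s (k - ((m + 1 : ℕ) : ℤ)))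
    have h3 := hr (k - ((m + 1 : ℕ) : ℤ))
    rw [e] at h1 h2 h3
    have h4 : 𝒜 k (k - m) (s (k - m)) - 𝒜 k (k - ((m + 1 : ℕ) : ℤ)) (s (k - ((m + 1 : ℕ) : ℤ)))
        = 𝒜 k (k - m) (r (k - ((m + 1 : ℕ) : ℤ))) := by
      rw [h1, map_add, h2]; abel
    show ‖𝒜 k (k - m) (s (k - m)) - 𝒜 k (k - ((m + 1 : ℕ) : ℤ)) (s (k - ((m + 1 : ℕ) : ℤ)))‖ ≤ _
    rw [h4]
    refine (hstab k (k - m) (by omega) _ h3).trans ?_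
    have h5 := hE (k - ((m + 1 : ℕ) : ℤ))
    have h6 := aux_w μ ((k - ((m + 1 : ℕ) : ℤ) : ℤ) : ℝ) k hμ n (m + 1) (by
      push_cast
      rw [abs_le]; constructor <;> linarith [(Nat.cast_nonneg m : (0:ℝ) ≤ m)])
    have h7 : Real.exp (-lam * (m : ℝ)) * Real.exp (μ * (m + 1)) =
        Real.exp μ * Real.exp (-(lam - μ) * m) := by
      rw [← Real.exp_add, ← Real.exp_add]; ring_nf
    calc _ ≤ D * Real.exp (-lam * ((k : ℝ) - ((k - m : ℤ) : ℝ))) *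
          (E * (Real.exp (μ * (m + 1)) * Real.exp (μ * |(k : ℝ) - n|))) := by
            apply mul_le_mul_of_nonneg_left _ (by positivity)
            exact h5.trans (mul_le_mul_of_nonneg_left h6 hE0)
      _ = D * E * (Real.exp (-lam * (m : ℝ)) * Real.exp (μ * (m + 1)))
            * Real.exp (μ * |(k : ℝ) - n|) := by push_cast; rw [sub_sub_cancel]; ring
      _ = _ := by rw [h7]; ring

lemma aux_u (A : ℤ → X ≃L[ℝ] X) (𝒜 : ℤ → ℤ → X →L[ℝ] X)
    (hid : ∀ n, 𝒜 n n = ContinuousLinearMap.id ℝ X)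
    (hcyc : ∀ k j x, 𝒜 k (j + 1) (A j x) = 𝒜 k j x)
    (U : ℤ → Submodule ℝ X)
    (D lam μ : ℝ) (hD : 0 < D) (hlam : 0 < lam) (hμ : 0 ≤ μ) (hμl : μ < lam)
    (hunst : ∀ m n, m ≤ n → ∀ x ∈ U n,
      ‖𝒜 m n x‖ ≤ D * Real.exp (-lam * ((n : ℝ) - (m : ℝ))) * ‖x‖)
    (u r : ℤ → X) (hs : ∀ k, u k ∈ U k) (hr : ∀ k, r k ∈ U (k + 1))
    (hrec : ∀ k, u (k + 1) = A k (u k) + r k) (b E : ℝ) (hb : ∀ k, ‖u k‖ ≤ b) (n : ℤ)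
    (hE : ∀ k, ‖r k‖ ≤ E * Real.exp (μ * |(k : ℝ) - n|)) (k : ℤ) :
    ‖u k‖ ≤ D * E * Real.exp μ * Real.exp (μ * |(k : ℝ) - n|) / (1 - Real.exp (-(lam - μ))) := by
  have hE0 : 0 ≤ E := by
    have := (norm_nonneg _).trans (hE n)
    simpa using this
  have := aux_geom (fun m : ℕ => 𝒜 k (k + m) (u (k + m)))
    (D * E * Real.exp μ * Real.exp (μ * |(k : ℝ) - n|)) (lam - μ) D lam b hlam (by linarith)
    ?_ ?_
  · simpa [hid] using this
  · intro m
    refine (hunst k (k + m) (by omega) _ (hs _)).trans ?_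
    push_cast
    rw [add_sub_cancel_left]
    exact mul_le_mul_of_nonneg_left (hb _) (by positivity)
  · intro m
    have e : k + ((m + 1 : ℕ) : ℤ) = k + m + 1 := by push_cast; ring
    have h1 := hrec (k + m)
    have h2 := hcyc k (k + m) (u (k + m))
    have h3 := hr (k + m)
    have h4 : 𝒜 k (k + m) (u (k + m)) - 𝒜 k (k + ((m + 1 : ℕ) : ℤ)) (u (k + ((m + 1 : ℕ) : ℤ)))
        = - 𝒜 k (k + m + 1) (r (k + m)) := by
      rw [e, h1, map_add, h2]; abel
    show ‖𝒜 k (k + m) (u (k + m)) - 𝒜 k (k + ((m + 1 : ℕ) : ℤ)) (u (k + ((m + 1 : ℕ) : ℤ)))‖ ≤ _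
    rw [h4, norm_neg]
    refine (hunst k (k + m + 1) (by omega) _ h3).trans ?_
    have h5 := hE (k + m)
    have h6 := aux_w μ ((k + m : ℤ) : ℝ) k hμ n (m + 1) (by
      push_cast
      rw [abs_le]; constructor <;> linarith [(Nat.cast_nonneg m : (0:ℝ) ≤ m)])
    have h7 : Real.exp (-lam * (m + 1 : ℝ)) * Real.exp (μ * (m + 1)) ≤
        Real.exp μ * Real.exp (-(lam - μ) * m) := by
      rw [← Real.exp_add, ← Real.exp_add, Real.exp_le_exp]; nlinarith
    calc _ ≤ D * Real.exp (-lam * (((k + m + 1 : ℤ) : ℝ) - k)) *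
          (E * (Real.exp (μ * (m + 1)) * Real.exp (μ * |(k : ℝ) - n|))) := by
            apply mul_le_mul_of_nonneg_left _ (by positivity)
            exact h5.trans (mul_le_mul_of_nonneg_left h6 hE0)
      _ = D * E * (Real.exp (-lam * (m + 1 : ℝ)) * Real.exp (μ * (m + 1)))
            * Real.exp (μ * |(k : ℝ) - n|) := by
            push_cast; rw [show (k : ℝ) + m + 1 - k = m + 1 by ring]; ring
      _ ≤ D * E * (Real.exp μ * Real.exp (-(lam - μ) * m))
            * Real.exp (μ * |(k : ℝ) - n|) := by gcongr
      _ = _ := by ring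

lemma aux_main (A : ℤ → X ≃L[ℝ] X) (𝒜 : ℤ → ℤ → X →L[ℝ] X)
    (hid : ∀ n, 𝒜 n n = ContinuousLinearMap.id ℝ X)
    (hcyc : ∀ k j x, 𝒜 k (j + 1) (A j x) = 𝒜 k j x)
    (S U : ℤ → Submodule ℝ X)
    (hcompl : ∀ n, IsCompl (S n) (U n))
    (hSinv : ∀ n, ∀ x ∈ S n, A n x ∈ S (n + 1))
    (hUinv : ∀ n, ∀ x ∈ U (n + 1), (A n).symm x ∈ U n)
    (D lam μ : ℝ) (hD : 0 < D) (hlam : 0 < lam) (hμ : 0 ≤ μ) (hμl : μ < lam)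
    (hstab : ∀ m n, n ≤ m → ∀ x ∈ S n,
      ‖𝒜 m n x‖ ≤ D * Real.exp (-lam * ((m : ℝ) - (n : ℝ))) * ‖x‖)
    (hunst : ∀ m n, m ≤ n → ∀ x ∈ U n,
      ‖𝒜 m n x‖ ≤ D * Real.exp (-lam * ((n : ℝ) - (m : ℝ))) * ‖x‖)
    (P : ℤ → X →L[ℝ] X)
    (hPran : ∀ n x, P n x ∈ S n)
    (hPS : ∀ n, ∀ x ∈ S n, P n x = x)
    (hPU : ∀ n, ∀ x ∈ U n, P n x = 0)
    (hPbdd : ∃ C, ∀ n, ‖P n‖ ≤ C) :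
    ∃ K > 0, ∀ (d g : ℤ → X) (n : ℤ) (a b c : ℝ), 0 ≤ a → 0 ≤ c → K * c ≤ 1 / 2 →
      (∀ k, d (k + 1) = A k (d k) + g k) →
      (∀ k, d k ∈ S k ⊔ (U (k + 1)).map ((A k).symm.toLinearEquiv.toLinearMap)) →
      (∀ k, ‖d k‖ ≤ b) →
      (∀ k, ‖g k‖ ≤ a * Real.exp (μ * |(k : ℝ) - n|) + c * ‖d k‖) →
      ‖d n‖ ≤ 2 * K * a := by
  obtain ⟨C, hC⟩ := hPbdd
  have hC0 : 0 ≤ C := (norm_nonneg _).trans (hC 0)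
  have hθ : 0 < 1 - Real.exp (-(lam - μ)) := by
    rw [sub_pos, Real.exp_lt_one_iff]; linarith
  have hPn : ∀ n x, ‖P n x‖ ≤ (1 + C) * ‖x‖ := fun n x => by
    have := (P n).le_of_opNorm_le (hC n) x
    nlinarith [norm_nonneg x]
  have hQn : ∀ n x, ‖x - P n x‖ ≤ (1 + C) * ‖x‖ := fun n x => by
    have := (P n).le_of_opNorm_le (hC n) x
    have := norm_sub_le x (P n x)
    nlinarith [norm_nonneg x]
  have hQU : ∀ n x, x - P n x ∈ U n := by
    intro n x
    obtain ⟨s, hs, u, hu, rfl⟩ := Submodule.mem_sup.1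
      ((hcompl n).sup_eq_top ▸ Submodule.mem_top : x ∈ S n ⊔ U n)
    rw [map_add, hPS n s hs, hPU n u hu]
    simpa using hu
  set K : ℝ := 2 * (D * (1 + C) * Real.exp μ / (1 - Real.exp (-(lam - μ)))) with hK
  have hK0 : 0 < K := by positivity
  refine ⟨K, hK0, ?_⟩
  intro d g n a b c ha hc hKc hrec hT hb hg
  -- unstable parts are mapped to unstable parts
  have hAU : ∀ k, A k (d k - P k (d k)) ∈ U (k + 1) := by
    intro k
    obtain ⟨s, hs, u, hu, hsu⟩ := Submodule.mem_sup.1 (hT k)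
    obtain ⟨v, hv, hvu⟩ := Submodule.mem_map.1 hu
    have hvu' : (A k).symm v = u := hvu
    have huU : u ∈ U k := hvu' ▸ hUinv k v hv
    rw [← hsu, map_add, hPS k s hs, hPU k u huU, add_zero, add_sub_cancel_left, ← hvu']
    simpa using hv
  have hPA : ∀ k, P (k + 1) (A k (d k)) = A k (P k (d k)) := by
    intro k
    have h1 : A k (d k) = A k (P k (d k)) + A k (d k - P k (d k)) := by
      rw [← map_add]; congr 1; abel
    rw [h1, map_add, hPS _ _ (hSinv k _ (hPran k _)), hPU _ _ (hAU k), add_zero]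
  have key : ∀ B : ℝ, (∀ k, ‖d k‖ ≤ B * Real.exp (μ * |(k : ℝ) - n|)) →
      ∀ k, ‖d k‖ ≤ K * (a + c * B) * Real.exp (μ * |(k : ℝ) - n|) := by
    intro B hB k
    have hgE : ∀ k, ‖g k‖ ≤ (a + c * B) * Real.exp (μ * |(k : ℝ) - n|) := fun k => by
      have := mul_le_mul_of_nonneg_left (hB k) hc
      linarith [hg k]
    have hs := aux_s A 𝒜 hid hcyc S D lam μ hD hlam hμ hμl hstab
      (fun k => P k (d k)) (fun k => P (k + 1) (g k)) (fun k => hPran _ _) (fun k => hPran _ _)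
      (fun k => by rw [hrec, map_add, hPA]) ((1 + C) * b) ((1 + C) * (a + c * B))
      (fun k => (hPn _ _).trans (by gcongr; exact hb k)) n
      (fun k => (hPn _ _).trans (by rw [mul_assoc]; gcongr; exact hgE k)) k
    have hu := aux_u A 𝒜 hid hcyc U D lam μ hD hlam hμ hμl hunst
      (fun k => d k - P k (d k)) (fun k => g k - P (k + 1) (g k)) (fun k => hQU _ _)
      (fun k => hQU _ _)
      (fun k => by rw [hrec, map_add, hPA, map_sub]; abel) ((1 + C) * b)
      ((1 + C) * (a + c * B))
      (fun k => (hQn _ _).trans (by gcongr; exact hb k)) n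
      (fun k => (hQn _ _).trans (by rw [mul_assoc]; gcongr; exact hgE k)) k
    have h1 : ‖d k‖ ≤ ‖P k (d k)‖ + ‖d k - P k (d k)‖ := by
      have := norm_add_le (P k (d k)) (d k - P k (d k))
      rwa [add_sub_cancel] at this
    beta_reduce at hs hu
    refine h1.trans ((add_le_add hs hu).trans (le_of_eq ?_))
    rw [hK]; field_simp; ring
  -- weighted supremum
  set N : ℝ := ⨆ k : ℤ, ‖d k‖ / Real.exp (μ * |(k : ℝ) - n|) with hN
  have hbdd : BddAbove (Set.range fun k : ℤ => ‖d k‖ / Real.exp (μ * |(k : ℝ) - n|)) := by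
    refine ⟨b, ?_⟩
    rintro _ ⟨k, rfl⟩
    refine (div_le_self (norm_nonneg _) ?_).trans (hb k)
    exact Real.one_le_exp (by positivity)
  have hNle : ∀ k, ‖d k‖ ≤ N * Real.exp (μ * |(k : ℝ) - n|) := fun k => by
    rw [← div_le_iff₀ (Real.exp_pos _)]
    exact le_ciSup hbdd k
  have hN2 : N ≤ K * (a + c * N) := by
    apply ciSup_le
    intro k
    rw [div_le_iff₀ (Real.exp_pos _)]
    exact key N hNle k
  have hdn := hNle n
  simp only [sub_self, abs_zero, mul_zero, Real.exp_zero, mul_one] at hdn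
  have hN0 : 0 ≤ N := (norm_nonneg _).trans hdn
  nlinarith

lemma aux_le [Nontrivial X] (A : ℤ → X ≃L[ℝ] X) (𝒜 : ℤ → ℤ → X →L[ℝ] X)
    (hid : ∀ n, 𝒜 n n = ContinuousLinearMap.id ℝ X)
    (hco : ∀ m n, 𝒜 (m + 1) n = (A m : X →L[ℝ] X).comp (𝒜 m n))
    (hcyc : ∀ k j x, 𝒜 k (j + 1) (A j x) = 𝒜 k j x)
    (S U : ℤ → Submodule ℝ X)
    (hcompl : ∀ n, IsCompl (S n) (U n))
    (D lam ρ : ℝ) (hD : 0 < D)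
    (hstab : ∀ m n, n ≤ m → ∀ x ∈ S n,
      ‖𝒜 m n x‖ ≤ D * Real.exp (-lam * ((m : ℝ) - (n : ℝ))) * ‖x‖)
    (hunst : ∀ m n, m ≤ n → ∀ x ∈ U n,
      ‖𝒜 m n x‖ ≤ D * Real.exp (-lam * ((n : ℝ) - (m : ℝ))) * ‖x‖)
    (hgrow : ∀ m n, ‖𝒜 m n‖ ≤ Real.exp (ρ * |(m : ℝ) - (n : ℝ)|)) : lam ≤ ρ := by
  by_contra! hlt
  have hco' : ∀ m n x, 𝒜 (m + 1) n x = A m (𝒜 m n x) := by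
    intro m n x; rw [hco]; rfl
  have fin : ∀ x : X, (∀ m : ℕ, ‖x‖ ≤ Real.exp (ρ * m) * (D * Real.exp (-lam * m) * ‖x‖)) →
      x = 0 := by
    intro x hx
    have ht := aux_tend D (lam - ρ) ‖x‖ (by linarith)
    have := ge_of_tendsto' ht (fun m => (hx m).trans (le_of_eq (by
      rw [show -(lam - ρ) * (m : ℝ) = ρ * m + -lam * m by ring, Real.exp_add]; ring)))
    exact norm_le_zero_iff.1 this
  have hS : ∀ x ∈ S 0, x = 0 := by
    intro x hx
    apply fin
    intro m
    have e : 𝒜 0 m (𝒜 m 0 x) = x := by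
      induction m with
      | zero => simp [hid]
      | succ m ih => push_cast; rw [hco', hcyc, ih]
    have h1 := (𝒜 0 m).le_of_opNorm_le (hgrow 0 m) (𝒜 m 0 x)
    have h2 := hstab m 0 (by omega) x hx
    rw [e] at h1
    refine h1.trans ?_
    push_cast at h2 ⊢
    simp only [zero_sub, abs_neg, Nat.abs_cast, sub_zero] at h2 ⊢
    gcongr
  have hU : ∀ x ∈ U 0, x = 0 := by
    intro x hx
    apply fin
    intro m
    have e : 𝒜 0 (-m) (𝒜 (-m) 0 x) = x := by
      induction m with
      | zero => simp [hid]
      | succ m ih =>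
        have h1 := hco' (-((m + 1 : ℕ) : ℤ)) 0 x
        have h2 := hcyc 0 (-((m + 1 : ℕ) : ℤ)) (𝒜 (-((m + 1 : ℕ) : ℤ)) 0 x)
        rw [show -((m + 1 : ℕ) : ℤ) + 1 = -m by push_cast; ring] at h1 h2
        rw [← h2, ← h1, ih]
    have h1 := (𝒜 0 (-m)).le_of_opNorm_le (hgrow 0 (-m)) (𝒜 (-m) 0 x)
    have h2 := hunst (-m) 0 (by omega) x hx
    rw [e] at h1
    refine h1.trans ?_
    push_cast at h2 ⊢
    simp only [zero_sub, neg_neg, Nat.abs_cast] at h2 ⊢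
    gcongr
  obtain ⟨x, hx⟩ := exists_ne (0 : X)
  apply hx
  obtain ⟨s, hs, u, hu, rfl⟩ := Submodule.mem_sup.1
      ((hcompl 0).sup_eq_top ▸ Submodule.mem_top : x ∈ S 0 ⊔ U 0)
  rw [hS s hs, hU u hu, add_zero]

/-- exponential growth of orbit differences -/
lemma aux_growth (e : ℤ → X) (r : ℝ) (h1 : ∀ k, ‖e (k + 1)‖ ≤ Real.exp r * ‖e k‖)
    (h2 : ∀ k, ‖e k‖ ≤ Real.exp r * ‖e (k + 1)‖) (n k : ℤ) :
    ‖e k‖ ≤ Real.exp (r * |(k : ℝ) - n|) * ‖e n‖ := by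
  induction k using Int.inductionOn' (b := n) with
  | zero => simp
  | succ k hk ih =>
    refine (h1 k).trans ((mul_le_mul_of_nonneg_left ih (Real.exp_pos _).le).trans (le_of_eq ?_))
    have hk' : (n : ℝ) ≤ k := by exact_mod_cast hk
    rw [← mul_assoc, ← Real.exp_add, abs_of_nonneg (by linarith),
      abs_of_nonneg (by push_cast; linarith)]
    push_cast; ring_nf
  | pred k hk ih =>
    have h := h2 (k - 1)
    rw [sub_add_cancel] at h
    refine h.trans ((mul_le_mul_of_nonneg_left ih (Real.exp_pos _).le).trans (le_of_eq ?_))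
    have hk' : (k : ℝ) ≤ n := by exact_mod_cast hk
    rw [← mul_assoc, ← Real.exp_add, abs_of_nonpos (by linarith),
      abs_of_nonpos (by push_cast; linarith)]
    push_cast; ring_nf

lemma aux_pow (t R α : ℝ) (ht : 0 ≤ t) (hR : t ≤ R) (hα0 : 0 < α) (hα1 : α ≤ 1) :
    t ≤ (1 + R) * t ^ α := by
  have h0 : 0 ≤ t ^ α := Real.rpow_nonneg ht _
  rcases le_total t 1 with h | h
  · have := Real.self_le_rpow_of_le_one ht h hα1
    nlinarith
  · have := Real.one_le_rpow h hα0.le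
    nlinarith

lemma aux_min (x c M t α : ℝ) (hc : 0 ≤ c) (hM : 0 ≤ M) (ht : 0 ≤ t) (hα0 : 0 < α) (hα1 : α ≤ 1)
    (q : ℝ) (hq : 0 ≤ q)
    (h1 : x ≤ c * t + q) (h2 : x ≤ M) : x ≤ (c + M) * t ^ α + q := by
  have h0 : 0 ≤ t ^ α := Real.rpow_nonneg ht _
  rcases le_total t 1 with h | h
  · have := Real.self_le_rpow_of_le_one ht h hα1
    nlinarith
  · have := Real.one_le_rpow h hα0.le
    nlinarith

end Aux

theorem stmt_16
    {X : Type*} [NormedAddCommGroup X] [NormedSpace ℝ X] [CompleteSpace X]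
    (A : ℤ → X ≃L[ℝ] X) (𝒜 : ℤ → ℤ → X →L[ℝ] X)
    (hid : ∀ n, 𝒜 n n = ContinuousLinearMap.id ℝ X)
    (hco : ∀ m n, 𝒜 (m + 1) n = (A m : X →L[ℝ] X).comp (𝒜 m n))
    (S U : ℤ → Submodule ℝ X)
    (hScl : ∀ n, IsClosed (S n : Set X)) (hUcl : ∀ n, IsClosed (U n : Set X))
    (hcompl : ∀ n, IsCompl (S n) (U n))
    (hSinv : ∀ n, ∀ x ∈ S n, A n x ∈ S (n + 1))
    (hUinv : ∀ n, ∀ x ∈ U (n + 1), (A n).symm x ∈ U n)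
    (D lam ρ : ℝ) (hD : 0 < D) (hlam : 0 < lam) (hρ : 0 < ρ)
    (hstab : ∀ m n, n ≤ m → ∀ x ∈ S n,
      ‖𝒜 m n x‖ ≤ D * Real.exp (-lam * ((m : ℝ) - (n : ℝ))) * ‖x‖)
    (hunst : ∀ m n, m ≤ n → ∀ x ∈ U n,
      ‖𝒜 m n x‖ ≤ D * Real.exp (-lam * ((n : ℝ) - (m : ℝ))) * ‖x‖)
    (P : ℤ → X →L[ℝ] X)
    (hPran : ∀ n x, P n x ∈ S n)
    (hPS : ∀ n, ∀ x ∈ S n, P n x = x)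
    (hPU : ∀ n, ∀ x ∈ U n, P n x = 0)
    (hPbdd : ∃ C, ∀ n, ‖P n‖ ≤ C)
    -- growth bound ‖𝒜(m,n)‖ ≤ e^{ρ|m−n|}
    (hgrow : ∀ m n, ‖𝒜 m n‖ ≤ Real.exp (ρ * |(m : ℝ) - (n : ℝ)|))
    (α : ℝ) (hα0 : 0 < α) (hα1 : α < lam / ρ) :
    ∃ c₀ > 0, ∀ c : ℝ, 0 < c → c < c₀ →
      ∀ f : ℤ → X → X,
        (∀ n x y, ‖f n x - f n y‖ ≤ c * ‖x - y‖) →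
        (∃ M, ∀ n x, ‖f n x‖ ≤ M) →
        (∀ n : ℤ, ∃ G : X ≃ₜ X, ∀ x, G x = A n x + f n x) →
        ∀ H : ℤ → X ≃ₜ X,
          (∀ (n : ℤ) (x : X), H (n + 1) (A n x) = A n (H n x) + f n (H n x)) →
          (∃ C, ∀ (n : ℤ) (x : X), ‖H n x - x‖ ≤ C) →
          (∀ (n : ℤ) (x : X),
            H n x - x ∈ S n ⊔ (U (n + 1)).map ((A n).symm.toLinearEquiv.toLinearMap)) →
          ∀ B : Set X, Bornology.IsBounded B →
            ∃ C, ∀ (n : ℤ), ∀ x ∈ B, ∀ y ∈ B,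
              ‖H n x - H n y‖ ≤ C * ‖x - y‖ ^ α ∧
              ‖(H n).symm x - (H n).symm y‖ ≤ C * ‖x - y‖ ^ α := by
  have hcyc := aux_cyc A 𝒜 hid hco
  have hco' : ∀ m n x, 𝒜 (m + 1) n x = A m (𝒜 m n x) := by
    intro m n x; rw [hco]; rfl
  rcases subsingleton_or_nontrivial X with hX | hX
  · refine ⟨1, one_pos, ?_⟩
    intro c _ _ f _ _ _ H _ _ _ B _
    refine ⟨0, fun n x _ y _ => ?_⟩
    rw [Subsingleton.elim (H n x - H n y) 0,
      Subsingleton.elim ((H n).symm x - (H n).symm y) 0]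
    simp
  have hle : lam ≤ ρ := aux_le A 𝒜 hid hco hcyc S U hcompl D lam ρ hD hstab hunst hgrow
  have hαle : α ≤ 1 := hα1.le.trans ((div_le_one hρ).2 hle)
  have hαρ : α * ρ < lam := (lt_div_iff₀ hρ).1 hα1
  obtain ⟨ρ', hρ', hμl⟩ : ∃ ρ', ρ < ρ' ∧ α * ρ' < lam := by
    refine ⟨(ρ + lam / α) / 2, ?_, ?_⟩
    · have : ρ < lam / α := by rw [lt_div_iff₀ hα0]; linarith
      linarith
    · have : α * ((ρ + lam / α) / 2) = (α * ρ + lam) / 2 := by field_simp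
      rw [this]; linarith
  have hρ'0 : 0 < ρ' := hρ.trans hρ'
  obtain ⟨K, hK, hmain⟩ := aux_main A 𝒜 hid hcyc S U hcompl hSinv hUinv D lam (α * ρ') hD hlam
    (by positivity) hμl hstab hunst P hPran hPS hPU hPbdd
  have hx1 : 0 < Real.exp (-ρ) - Real.exp (-ρ') := by
    rw [sub_pos, Real.exp_lt_exp]; linarith
  have hx2 : 0 < Real.exp ρ' - Real.exp ρ := by
    rw [sub_pos, Real.exp_lt_exp]; linarith
  refine ⟨min (1 / (2 * K)) (min (Real.exp (-ρ) - Real.exp (-ρ')) (Real.exp ρ' - Real.exp ρ)),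
    by positivity, ?_⟩
  intro c hc hcc f hfL hfB _ H hH hHb hHT B hB
  obtain ⟨hc1, hc2, hc3⟩ : c < 1 / (2 * K) ∧ c < Real.exp (-ρ) - Real.exp (-ρ') ∧
      c < Real.exp ρ' - Real.exp ρ := by
    simpa only [lt_min_iff] using hcc
  have hKc : K * c ≤ 1 / 2 := by
    rw [lt_div_iff₀ (by positivity)] at hc1; linarith
  obtain ⟨M, hM⟩ := hfB
  have hM0 : 0 ≤ M := (norm_nonneg _).trans (hM 0 0)
  obtain ⟨C, hC⟩ := hHb
  have hC0 : 0 ≤ C := (norm_nonneg _).trans (hC 0 0)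
  -- norm bounds on one step of the linear cocycle
  have hA1 : ∀ k x, ‖A k x‖ ≤ Real.exp ρ * ‖x‖ := by
    intro k x
    have h := (𝒜 (k + 1) k).le_of_opNorm_le (hgrow (k + 1) k) x
    rw [hco', hid] at h
    simpa using h
  have hA2 : ∀ k x, ‖x‖ ≤ Real.exp ρ * ‖A k x‖ := by
    intro k x
    have h := (𝒜 k (k + 1)).le_of_opNorm_le (hgrow k (k + 1)) (A k x)
    rw [hcyc, hid] at h
    simpa using h
  -- basic estimate
  have hbase : ∀ (n : ℤ) (p q : X) (a : ℝ), 0 ≤ a →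
      (∀ k : ℤ, ‖f k (H k (𝒜 k n p)) - f k (H k (𝒜 k n q))‖ ≤
        a * Real.exp (α * ρ' * |(k : ℝ) - n|) +
          c * ‖(H k (𝒜 k n p) - 𝒜 k n p) - (H k (𝒜 k n q) - 𝒜 k n q)‖) →
      ‖(H n p - p) - (H n q - q)‖ ≤ 2 * K * a := by
    intro n p q a ha hg
    have := hmain (fun k => (H k (𝒜 k n p) - 𝒜 k n p) - (H k (𝒜 k n q) - 𝒜 k n q))
      (fun k => f k (H k (𝒜 k n p)) - f k (H k (𝒜 k n q))) n a (2 * C) c ha hc.le hKc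
      ?_ ?_ ?_ hg
    · simpa [hid] using this
    · intro k
      beta_reduce
      rw [hco', hco', hH, hH, map_sub, map_sub, map_sub]
      abel
    · intro k
      exact Submodule.sub_mem _ (hHT k _) (hHT k _)
    · intro k
      refine (norm_sub_le _ _).trans ?_
      linarith [hC k (𝒜 k n p), hC k (𝒜 k n q)]
  have hf2 : ∀ k x y, ‖f k x - f k y‖ ≤ 2 * M := by
    intro k x y
    refine (norm_sub_le _ _).trans ?_
    linarith [hM k x, hM k y]
  have hpw : ∀ s t : ℝ, 0 ≤ t → (Real.exp (ρ' * s) * t) ^ α = t ^ α * Real.exp (α * ρ' * s) := by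
    intro s t ht
    rw [Real.mul_rpow (Real.exp_pos _).le ht, ← Real.exp_mul, mul_comm]
    congr 2; ring
  have hB1 : ∀ (n : ℤ) (p q : X), ‖(H n p - p) - (H n q - q)‖ ≤
      2 * K * ((c + 2 * M) * ‖p - q‖ ^ α) := by
    intro n p q
    apply hbase n p q _ (by positivity)
    intro k
    have ht : ‖𝒜 k n p - 𝒜 k n q‖ ≤ Real.exp (ρ' * |(k : ℝ) - n|) * ‖p - q‖ := by
      rw [← map_sub]
      refine (𝒜 k n).le_of_opNorm_le ((hgrow k n).trans ?_) _
      gcongr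
    have h1 : ‖f k (H k (𝒜 k n p)) - f k (H k (𝒜 k n q))‖ ≤ c * ‖𝒜 k n p - 𝒜 k n q‖ +
        c * ‖(H k (𝒜 k n p) - 𝒜 k n p) - (H k (𝒜 k n q) - 𝒜 k n q)‖ := by
      refine (hfL k _ _).trans ?_
      rw [← mul_add]
      apply mul_le_mul_of_nonneg_left _ hc.le
      refine le_trans (le_of_eq ?_) (norm_add_le _ _)
      congr 1; abel
    have h2 := aux_min _ c (2 * M) _ α hc.le (by positivity) (norm_nonneg _) hα0 hαle _
      (by positivity) h1 (hf2 _ _ _)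
    refine h2.trans ?_
    gcongr ?_ + _
    rw [mul_assoc, ← hpw _ _ (norm_nonneg _)]
    gcongr
  have hB2 : ∀ (n : ℤ) (p q : X), ‖(H n p - p) - (H n q - q)‖ ≤
      2 * K * ((c + 2 * M) * ‖H n p - H n q‖ ^ α) := by
    intro n p q
    apply hbase n p q _ (by positivity)
    intro k
    have hee : ∀ k, H (k + 1) (𝒜 (k + 1) n p) - H (k + 1) (𝒜 (k + 1) n q) =
        A k (H k (𝒜 k n p) - H k (𝒜 k n q)) +
          (f k (H k (𝒜 k n p)) - f k (H k (𝒜 k n q))) := by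
      intro k
      rw [hco', hco', hH, hH, map_sub]; abel
    have ht := aux_growth (fun k => H k (𝒜 k n p) - H k (𝒜 k n q)) ρ' (by
      intro k
      beta_reduce
      rw [hee]
      refine (norm_add_le _ _).trans ?_
      have h1 := hA1 k (H k (𝒜 k n p) - H k (𝒜 k n q))
      have h2 := hfL k (H k (𝒜 k n p)) (H k (𝒜 k n q))
      nlinarith [norm_nonneg (H k (𝒜 k n p) - H k (𝒜 k n q))]) (by
      intro k
      beta_reduce
      have h1 := hA2 k (H k (𝒜 k n p) - H k (𝒜 k n q))
      have h2 := hfL k (H k (𝒜 k n p)) (H k (𝒜 k n q))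
      have h3 : ‖A k (H k (𝒜 k n p) - H k (𝒜 k n q))‖ ≤
          ‖H (k + 1) (𝒜 (k + 1) n p) - H (k + 1) (𝒜 (k + 1) n q)‖ +
          ‖f k (H k (𝒜 k n p)) - f k (H k (𝒜 k n q))‖ := by
        refine le_trans (le_of_eq ?_) (norm_sub_le _ _)
        rw [hee, add_sub_cancel_right]
      generalize ‖H (k + 1) (𝒜 (k + 1) n p) - H (k + 1) (𝒜 (k + 1) n q)‖ = E1 at *
      have h0 := norm_nonneg (H k (𝒜 k n p) - H k (𝒜 k n q))
      generalize ‖H k (𝒜 k n p) - H k (𝒜 k n q)‖ = E0 at *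
      have h4 : Real.exp (-ρ) * E0 ≤ E1 + c * E0 := by
        rw [Real.exp_neg, inv_mul_le_iff₀ (Real.exp_pos _)]
        refine h1.trans (mul_le_mul_of_nonneg_left ?_ (Real.exp_pos _).le)
        linarith
      have h5 : Real.exp (-ρ') * E0 ≤ E1 := by nlinarith
      rwa [Real.exp_neg, inv_mul_le_iff₀ (Real.exp_pos _)] at h5) n k
    simp only [hid, ContinuousLinearMap.id_apply] at ht
    have h2 := aux_min _ c (2 * M) _ α hc.le (by positivity) (norm_nonneg _) hα0 hαle 0
      le_rfl (by rw [add_zero]; exact hfL k (H k (𝒜 k n p)) (H k (𝒜 k n q))) (hf2 _ _ _)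
    refine h2.trans ?_
    gcongr ?_ + ?_
    · rw [mul_assoc, ← hpw _ _ (norm_nonneg _)]
      gcongr
    · positivity
  obtain ⟨R, hR⟩ := Metric.isBounded_iff.1 hB
  refine ⟨(1 + R) + 2 * K * (c + 2 * M), ?_⟩
  intro n x hx y hy
  have hxy : ‖x - y‖ ≤ R := by rw [← dist_eq_norm]; exact hR hx hy
  have hp := aux_pow _ R α (norm_nonneg _) hxy hα0 hαle
  constructor
  · have h1 := hB1 n x y
    have h2 : ‖H n x - H n y‖ ≤ ‖x - y‖ + ‖(H n x - x) - (H n y - y)‖ := by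
      refine le_trans (le_of_eq ?_) (norm_add_le _ _)
      congr 1; abel
    linarith
  · have h1 := hB2 n ((H n).symm x) ((H n).symm y)
    simp only [Homeomorph.apply_symm_apply] at h1
    have h2 : ‖(H n).symm x - (H n).symm y‖ ≤
        ‖x - y‖ + ‖(x - (H n).symm x) - (y - (H n).symm y)‖ := by
      refine le_trans (le_of_eq ?_) (norm_sub_le _ _)
      congr 1; abel
    linarith
end
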